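/- arXiv:1102.1324 — 2 statements merged into one kernel-verified Lean document; each statement's English description precedes it below -/
import Mathlib

section
/- Let L(x,y) = ∫_{ℝᵈ} e^{i(x−y)·t} dγ(t) be a continuous translation-invariant 𝓛(Λ)-valued reproducing kernel on ℝᵈ, where γ is an 𝓛₊(Λ)-valued Borel measure of bounded variation, and let γ = γ_c + γ_s be its Lebesgue decomposition with respect to Lebesgue measure, giving L = L_c + L_s. Then H_{L_c} ∩ H_{L_s} = {0}, and consequently H_L is the orthogonal direct sum H_{L_c} ⊕ H_{L_s}. -/
open MeasureTheory ContinuousLinearMap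
open scoped ComplexOrder

noncomputable section

local notation "⟪" x ", " y "⟫" => @inner ℂ _ _ x y

section Defs

variable {X : Type*} {Λ : Type*} [NormedAddCommGroup Λ] [InnerProductSpace ℂ Λ]

/-- Data exhibiting a Hilbert space `H`, embedded in the `Λ`-valued functions on `X` by `J`,
as the reproducing kernel Hilbert space of the operator-valued kernel `K`;
`kf x ξ` is the element representing `K(x,·)ξ`. -/
structure IsVRKHS (K : X → X → Λ →L[ℂ] Λ) (H : Type*) [NormedAddCommGroup H]
    [InnerProductSpace ℂ H] (J : H →ₗ[ℂ] (X → Λ)) (kf : X → Λ → H) : Prop where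
  inj : Function.Injective J
  kfun_eq : ∀ (x : X) (ξ : Λ), J (kf x ξ) = fun y => K x y ξ
  repro : ∀ (f : H) (x : X) (ξ : Λ), ⟪kf x ξ, f⟫ = ⟪ξ, J f x⟫

/-- Data exhibiting `H` as the RKHS of a scalar-valued kernel `k` on `Y`. -/
structure IsSRKHS {Y : Type*} (k : Y → Y → ℂ) (H : Type*) [NormedAddCommGroup H]
    [InnerProductSpace ℂ H] (J : H →ₗ[ℂ] (Y → ℂ)) (kf : Y → H) : Prop where
  inj : Function.Injective J
  kfun_eq : ∀ y : Y, J (kf y) = fun z => k y z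
  repro : ∀ (f : H) (y : Y), ⟪kf y, f⟫ = J f y

/-- `H₁ ⪯ H₂` : every element of `H₁` is an element of `H₂` (as functions) with the same norm. -/
def RKHSle {H₁ H₂ V : Type*} [NormedAddCommGroup H₁] [InnerProductSpace ℂ H₁]
    [NormedAddCommGroup H₂] [InnerProductSpace ℂ H₂] [AddCommGroup V] [Module ℂ V]
    (J₁ : H₁ →ₗ[ℂ] V) (J₂ : H₂ →ₗ[ℂ] V) : Prop :=
  ∀ f : H₁, ∃ g : H₂, J₂ g = J₁ f ∧ ‖g‖ = ‖f‖

/-- `K` is an `𝓛(Λ)`-valued reproducing kernel: hermitian and positive-definite. -/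
def IsOpKernel [CompleteSpace Λ] (K : X → X → Λ →L[ℂ] Λ) : Prop :=
  (∀ x y, K x y = ContinuousLinearMap.adjoint (K y x)) ∧
    ∀ (n : ℕ) (x : Fin n → X) (ξ : Fin n → Λ),
      0 ≤ ∑ j, ∑ k, ⟪ξ k, K (x j) (x k) (ξ j)⟫

/-- `k` is a scalar-valued reproducing kernel: hermitian and positive-definite. -/
def IsScalarKernel {Y : Type*} (k : Y → Y → ℂ) : Prop :=
  (∀ y z, k z y = starRingEnd ℂ (k y z)) ∧
    ∀ (n : ℕ) (y : Fin n → Y) (c : Fin n → ℂ),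
      0 ≤ ∑ j, ∑ l, starRingEnd ℂ (c l) * c j * k (y j) (y l)

/-- The relation `A ⪯ B` for positive operators. -/
def OpPrec (A B : Λ →L[ℂ] Λ) : Prop :=
  ∀ ξ : Λ, ∃ η : Λ, A ξ = B η ∧ ⟪ξ, A ξ⟫ = ⟪η, B η⟫

end Defs

/-!
Fix `ξ : Λ` and let `μ` be the diagonal measure at `ξ` of one of the two kernels. Sending the
character `t ↦ exp (i⟨x, t⟩)` to the representer `kf x ξ` preserves inner products, hence defines an
isometry from `L²(μ)`, where characters are total, into the Hilbert space of that kernel. By its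
adjoint, every scalar component `x ↦ ⟪f x, ξ⟫` of a member `f` of the space is the Fourier
transform of an `L²(μ)` density. A common member of the two spaces thus yields densities against
mutually singular measures with equal Fourier transforms; glued along a separating set they form one
density against the sum of the measures whose Fourier transform is zero, so both vanish.

A reproducing kernel Hilbert space is determined by its kernel up to isometry. When the component
spaces meet only in zero, their Hilbert direct sum embeds in the functions on `X` and has the sum of
the kernels as kernel, so it is the space of the sum.
-/

section GramMatrix

variable {𝕜 ι H H' : Type*} [RCLike 𝕜] [NormedAddCommGroup H] [InnerProductSpace 𝕜 H]
  [NormedAddCommGroup H'] [InnerProductSpace 𝕜 H']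

theorem dense_span_range_of_forall_inner_eq_zero [CompleteSpace H] {u : ι → H}
    (hu : ∀ f, (∀ i, inner 𝕜 (u i) f = 0) → f = 0) :
    Dense (Submodule.span 𝕜 (Set.range u) : Set H) := by
  rw [Submodule.dense_iff_topologicalClosure_eq_top, Submodule.topologicalClosure_eq_top_iff,
    Submodule.eq_bot_iff]
  exact fun f hf ↦ hu f fun i ↦ hf (u i) (Submodule.subset_span ⟨i, rfl⟩)

theorem norm_linearCombination_eq_of_inner_eq {u : ι → H} {v : ι → H'}
    (huv : ∀ i j, inner 𝕜 (u i) (u j) = inner 𝕜 (v i) (v j)) (c : ι →₀ 𝕜) :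
    ‖Finsupp.linearCombination 𝕜 u c‖ = ‖Finsupp.linearCombination 𝕜 v c‖ := by
  have h_inner : inner 𝕜 (Finsupp.linearCombination 𝕜 u c) (Finsupp.linearCombination 𝕜 u c) =
      inner 𝕜 (Finsupp.linearCombination 𝕜 v c) (Finsupp.linearCombination 𝕜 v c) := by
    simp only [Finsupp.linearCombination_apply, Finsupp.sum, sum_inner, inner_sum,
      inner_smul_left, inner_smul_right, huv]
  rw [@norm_eq_sqrt_re_inner 𝕜, @norm_eq_sqrt_re_inner 𝕜, h_inner]

theorem exists_linearIsometry_of_inner_eq [CompleteSpace H'] {u : ι → H} {v : ι → H'}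
    (hu : Dense (Submodule.span 𝕜 (Set.range u) : Set H))
    (huv : ∀ i j, inner 𝕜 (u i) (u j) = inner 𝕜 (v i) (v j)) :
    ∃ T : H →ₗᵢ[𝕜] H', ∀ i, T (u i) = v i := by
  let A := Finsupp.linearCombination 𝕜 u
  let B := Finsupp.linearCombination 𝕜 v
  have hA : DenseRange A := by
    rwa [DenseRange, ← LinearMap.coe_range, Finsupp.range_linearCombination]
  have h_norm (c) : ‖A c‖ = ‖B c‖ := norm_linearCombination_eq_of_inner_eq huv c
  let T := B.extendOfNorm A
  have hT (c) : T (A c) = B c :=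
    LinearMap.extendOfNorm_eq hA ⟨1, fun c ↦ by rw [h_norm, one_mul]⟩ c
  refine ⟨⟨T, fun f ↦ ?_⟩, fun i ↦ ?_⟩
  · refine hA.induction_on f (isClosed_eq (by fun_prop) continuous_norm) fun c ↦ ?_
    exact (congrArg norm (hT c)).trans (h_norm c).symm
  · simpa [A, B] using hT (Finsupp.single i 1)

end GramMatrix

section DirectSum

variable {H H₁ H₂ V : Type*} [NormedAddCommGroup H] [InnerProductSpace ℂ H]
  [NormedAddCommGroup H₁] [InnerProductSpace ℂ H₁] [NormedAddCommGroup H₂]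
  [InnerProductSpace ℂ H₂] [AddCommGroup V] [Module ℂ V]

/-- The sum map `(f₁, f₂) ↦ J₁ f₁ + J₂ f₂` on the Hilbert direct sum `H₁ ⊕ H₂`, which is the
`L²` product `WithLp 2 (H₁ × H₂)`. It embeds `H₁ ⊕ H₂` into the function space `V` as the
reproducing kernel Hilbert space of a sum of kernels. -/
def sumEmbedding (J₁ : H₁ →ₗ[ℂ] V) (J₂ : H₂ →ₗ[ℂ] V) : WithLp 2 (H₁ × H₂) →ₗ[ℂ] V :=
  J₁.coprod J₂ ∘ₗ (WithLp.linearEquiv 2 ℂ (H₁ × H₂)).toLinearMap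

variable {J : H →ₗ[ℂ] V} {J₁ : H₁ →ₗ[ℂ] V} {J₂ : H₂ →ₗ[ℂ] V}

theorem sumEmbedding_apply (p : WithLp 2 (H₁ × H₂)) :
    sumEmbedding J₁ J₂ p = J₁ p.fst + J₂ p.snd :=
  rfl

theorem sumEmbedding_injective (h₁ : Function.Injective J₁) (h₂ : Function.Injective J₂)
    (hd : Disjoint (LinearMap.range J₁) (LinearMap.range J₂)) :
    Function.Injective (sumEmbedding J₁ J₂) := by
  have h_coprod : LinearMap.ker (J₁.coprod J₂) = ⊥ := by
    rw [LinearMap.ker_coprod_of_disjoint_range _ _ hd, LinearMap.ker_eq_bot.2 h₁,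
      LinearMap.ker_eq_bot.2 h₂, Submodule.prod_bot]
  exact (LinearMap.ker_eq_bot.1 h_coprod).comp (WithLp.linearEquiv 2 ℂ (H₁ × H₂)).injective

theorem RKHSle.of_sumEmbedding_left (h : RKHSle (sumEmbedding J₁ J₂) J) : RKHSle J₁ J := fun f ↦ by
  obtain ⟨g, hg, hg_norm⟩ := h (WithLp.toLp 2 (f, 0))
  exact ⟨g, by simpa [sumEmbedding_apply] using hg, by rw [hg_norm, WithLp.norm_toLp_fst]⟩

theorem RKHSle.of_sumEmbedding_right (h : RKHSle (sumEmbedding J₁ J₂) J) :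
    RKHSle J₂ J := fun f ↦ by
  obtain ⟨g, hg, hg_norm⟩ := h (WithLp.toLp 2 (0, f))
  exact ⟨g, by simpa [sumEmbedding_apply] using hg, by rw [hg_norm, WithLp.norm_toLp_snd]⟩

end DirectSum

namespace IsVRKHS

variable {X Λ H H₁ H₂ : Type*} [NormedAddCommGroup Λ] [InnerProductSpace ℂ Λ]
  [NormedAddCommGroup H] [InnerProductSpace ℂ H]
  [NormedAddCommGroup H₁] [InnerProductSpace ℂ H₁]
  [NormedAddCommGroup H₂] [InnerProductSpace ℂ H₂]
  {K K₁ K₂ : X → X → Λ →L[ℂ] Λ} {J : H →ₗ[ℂ] (X → Λ)} {J₁ : H₁ →ₗ[ℂ] (X → Λ)}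
  {J₂ : H₂ →ₗ[ℂ] (X → Λ)} {kf : X → Λ → H} {kf₁ : X → Λ → H₁} {kf₂ : X → Λ → H₂}

theorem inner_kf_kf (hH : IsVRKHS K H J kf) (x y : X) (ξ η : Λ) :
    ⟪kf y η, kf x ξ⟫ = ⟪η, K x y ξ⟫ := by
  rw [hH.repro, hH.kfun_eq]

theorem inner_kf (hH : IsVRKHS K H J kf) (f : H) (x : X) (ξ : Λ) :
    ⟪f, kf x ξ⟫ = ⟪J f x, ξ⟫ := by
  rw [← inner_conj_symm, hH.repro, inner_conj_symm]

theorem dense_span_range_kf [CompleteSpace H] (hH : IsVRKHS K H J kf) :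
    Dense (Submodule.span ℂ (Set.range fun p : X × Λ ↦ kf p.1 p.2) : Set H) := by
  refine dense_span_range_of_forall_inner_eq_zero fun f hf ↦ hH.inj ?_
  ext x
  refine ext_inner_left ℂ fun ξ ↦ ?_
  rw [← hH.repro, hf (x, ξ), map_zero, Pi.zero_apply, inner_zero_right]

theorem rkhsle [CompleteSpace H₁] [CompleteSpace H₂] (h₁ : IsVRKHS K H₁ J₁ kf₁)
    (h₂ : IsVRKHS K H₂ J₂ kf₂) : RKHSle J₁ J₂ := by
  obtain ⟨T, hT⟩ := exists_linearIsometry_of_inner_eq (v := fun p : X × Λ ↦ kf₂ p.1 p.2)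
    h₁.dense_span_range_kf fun p q ↦ by rw [h₁.inner_kf_kf, h₂.inner_kf_kf]
  refine fun f ↦ ⟨T f, ?_, T.norm_map f⟩
  ext x
  refine ext_inner_left ℂ fun ξ ↦ ?_
  calc ⟪ξ, J₂ (T f) x⟫ = ⟪kf₂ x ξ, T f⟫ := (h₂.repro _ _ _).symm
    _ = ⟪T (kf₁ x ξ), T f⟫ := by rw [hT (x, ξ)]
    _ = ⟪ξ, J₁ f x⟫ := by rw [T.inner_map_map, h₁.repro]

theorem add (h₁ : IsVRKHS K₁ H₁ J₁ kf₁) (h₂ : IsVRKHS K₂ H₂ J₂ kf₂)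
    (hd : Disjoint (LinearMap.range J₁) (LinearMap.range J₂)) :
    IsVRKHS (K₁ + K₂) (WithLp 2 (H₁ × H₂)) (sumEmbedding J₁ J₂)
      fun x ξ ↦ WithLp.toLp 2 (kf₁ x ξ, kf₂ x ξ) where
  inj := sumEmbedding_injective h₁.inj h₂.inj hd
  kfun_eq x ξ := by
    ext y
    simp [sumEmbedding_apply, h₁.kfun_eq, h₂.kfun_eq]
  repro p x ξ := by
    simp [sumEmbedding_apply, WithLp.prod_inner_apply, h₁.repro, h₂.repro]

theorem orthogonal_decomposition [CompleteSpace H] [CompleteSpace H₁] [CompleteSpace H₂]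
    (h₁ : IsVRKHS K₁ H₁ J₁ kf₁) (h₂ : IsVRKHS K₂ H₂ J₂ kf₂) (hH : IsVRKHS (K₁ + K₂) H J kf)
    (hd : Disjoint (LinearMap.range J₁) (LinearMap.range J₂)) :
    RKHSle J₁ J ∧ RKHSle J₂ J ∧
      ∀ h : H, ∃ (f₁ : H₁) (f₂ : H₂),
        J h = J₁ f₁ + J₂ f₂ ∧ ‖h‖ ^ 2 = ‖f₁‖ ^ 2 + ‖f₂‖ ^ 2 := by
  have h_sum := h₁.add h₂ hd
  have h_le : RKHSle (sumEmbedding J₁ J₂) J := h_sum.rkhsle hH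
  refine ⟨h_le.of_sumEmbedding_left, h_le.of_sumEmbedding_right, fun h ↦ ?_⟩
  obtain ⟨p, hp, hp_norm⟩ := hH.rkhsle h_sum h
  exact ⟨p.fst, p.snd, hp.symm, by rw [← hp_norm, WithLp.prod_norm_sq_eq_of_L2]⟩

end IsVRKHS

section FourierUniqueness

open BoundedContinuousFunction ComplexConjugate

section Density

variable {α : Type*} [MeasurableSpace α] {μ : Measure α}

theorem ae_eq_zero_of_withDensity_ofReal_eq [SigmaFinite μ] {f : α → ℝ} (hf : AEMeasurable f μ)
    (h : μ.withDensity (fun t ↦ ENNReal.ofReal (f t)) =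
      μ.withDensity (fun t ↦ ENNReal.ofReal (-f t))) : f =ᵐ[μ] 0 := by
  have h_ae := (withDensity_eq_iff_of_sigmaFinite hf.ennreal_ofReal hf.neg.ennreal_ofReal).1 h
  filter_upwards [h_ae] with t ht
  have h_parts : max (f t) 0 = max (-f t) 0 := by
    simpa only [ENNReal.toReal_ofReal', Pi.neg_apply] using congrArg ENNReal.toReal ht
  rw [← max_zero_sub_max_neg_zero_eq_self (f t), h_parts, sub_self, Pi.zero_apply]

variable [TopologicalSpace α]

theorem inner_toLp_eq_integral [BorelSpace α] [IsFiniteMeasure μ] (g : α →ᵇ ℂ) (φ : Lp ℂ 2 μ) :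
    ⟪φ, toLp 2 μ ℂ g⟫ = ∫ t, g t * conj (φ t) ∂μ := by
  rw [L2.inner_def]
  refine integral_congr_ae ?_
  filter_upwards [g.coeFn_toLp 2 μ ℂ] with t ht
  rw [ht, RCLike.inner_apply]

variable [OpensMeasurableSpace α]

theorem integrable_boundedContinuousFunction_mul {f : α → ℂ} (hf : Integrable f μ) (g : α →ᵇ ℂ) :
    Integrable (fun t ↦ g t * f t) μ :=
  hf.bdd_mul g.continuous.aestronglyMeasurable (ae_of_all _ g.norm_coe_le_norm)

theorem integral_withDensity_ofReal_sub_integral_withDensity_ofReal_neg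
    {f : α → ℝ} (hf : Integrable f μ) (g : α →ᵇ ℂ) :
    ∫ t, g t ∂μ.withDensity (fun t ↦ ENNReal.ofReal (f t)) -
      ∫ t, g t ∂μ.withDensity (fun t ↦ ENNReal.ofReal (-f t)) = ∫ t, g t * f t ∂μ := by
  have integral_withDensity {p : α → ℝ} (hp : Integrable p μ) :
      ∫ t, g t ∂μ.withDensity (fun t ↦ ENNReal.ofReal (p t)) =
        ∫ t, g t * (max (p t) 0 : ℝ) ∂μ := by
    rw [integral_withDensity_eq_integral_toReal_smul₀ hp.1.aemeasurable.ennreal_ofReal (by simp)]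
    simp only [ENNReal.toReal_ofReal', Complex.real_smul, mul_comm]
  have integrable_mul_max {p : α → ℝ} (hp : Integrable p μ) :
      Integrable (fun t ↦ g t * (max (p t) 0 : ℝ)) μ :=
    integrable_boundedContinuousFunction_mul hp.pos_part.ofReal g
  have hf_neg : Integrable (fun t ↦ -f t) μ := hf.neg
  rw [integral_withDensity hf, integral_withDensity hf_neg,
    ← integral_sub (integrable_mul_max hf) (integrable_mul_max hf_neg)]
  refine integral_congr_ae (ae_of_all _ fun t ↦ ?_)
  simp only [← mul_sub, ← Complex.ofReal_sub, max_zero_sub_max_neg_zero_eq_self]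

end Density

variable {E : Type*} [NormedAddCommGroup E] [InnerProductSpace ℝ E]

theorem conj_innerProbChar (x t : E) : conj (innerProbChar x t) = innerProbChar (-x) t := by
  simp [innerProbChar_apply, ← Complex.exp_conj]

theorem innerProbChar_sub (x y t : E) :
    innerProbChar (x - y) t = innerProbChar x t * conj (innerProbChar y t) := by
  rw [conj_innerProbChar, innerProbChar_apply, innerProbChar_apply, innerProbChar_apply,
    ← Complex.exp_add, ← add_mul, ← Complex.ofReal_add, ← inner_add_right, sub_eq_add_neg]

variable [MeasurableSpace E] {μ ν : Measure E}

theorem integral_exp_I_mul_inner (x : E) :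
    ∫ t, Complex.exp (Complex.I * (inner ℝ x t : ℝ)) ∂μ = charFun μ x := by
  simp only [charFun_apply, mul_comm, real_inner_comm]

variable [BorelSpace E]

theorem inner_toLp_innerProbChar [IsFiniteMeasure μ] (x y : E) :
    ⟪toLp 2 μ ℂ (innerProbChar y), toLp 2 μ ℂ (innerProbChar x)⟫ = charFun μ (x - y) := by
  simp only [BoundedContinuousFunction.inner_toLp, charFun_eq_integral_innerProbChar,
    innerProbChar_sub]

variable [CompleteSpace E] [SecondCountableTopology E]

theorem ae_eq_zero_of_integral_innerProbChar_mul_ofReal_eq_zero [SigmaFinite μ] {f : E → ℝ}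
    (hf : Integrable f μ) (h : ∀ x, ∫ t, innerProbChar x t * f t ∂μ = 0) : f =ᵐ[μ] 0 := by
  have := isFiniteMeasure_withDensity_ofReal hf.2
  have : IsFiniteMeasure (μ.withDensity fun t ↦ ENNReal.ofReal (-f t)) :=
    isFiniteMeasure_withDensity_ofReal hf.neg.2
  refine ae_eq_zero_of_withDensity_ofReal_eq hf.1.aemeasurable (Measure.ext_of_charFun ?_)
  ext x
  rw [← sub_eq_zero, charFun_eq_integral_innerProbChar, charFun_eq_integral_innerProbChar,
    integral_withDensity_ofReal_sub_integral_withDensity_ofReal_neg hf, h]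

theorem ae_re_eq_zero_of_integral_innerProbChar_mul_eq_zero [SigmaFinite μ] {f : E → ℂ}
    (hf : Integrable f μ) (h : ∀ x, ∫ t, innerProbChar x t * f t ∂μ = 0) :
    (fun t ↦ (f t).re) =ᵐ[μ] 0 := by
  have hf_conj : Integrable (fun t ↦ conj (f t)) μ :=
    Complex.conjCLE.toContinuousLinearMap.integrable_comp hf
  have h_conj (x : E) : ∫ t, innerProbChar x t * conj (f t) ∂μ = 0 := by
    calc ∫ t, innerProbChar x t * conj (f t) ∂μ = conj (∫ t, innerProbChar (-x) t * f t ∂μ) := by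
          simp only [← integral_conj, map_mul, conj_innerProbChar, neg_neg]
      _ = 0 := by rw [h, map_zero]
  refine ae_eq_zero_of_integral_innerProbChar_mul_ofReal_eq_zero hf.re fun x ↦ ?_
  calc ∫ t, innerProbChar x t * ((f t).re : ℂ) ∂μ
      = ∫ t, (innerProbChar x t * f t + innerProbChar x t * conj (f t)) / 2 ∂μ := by
        simp only [Complex.re_eq_add_conj, ← mul_add, mul_div_assoc]
    _ = 0 := by
        rw [integral_div, integral_add (integrable_boundedContinuousFunction_mul hf _)
          (integrable_boundedContinuousFunction_mul hf_conj _), h, h_conj, add_zero, zero_div]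

theorem ae_eq_zero_of_integral_innerProbChar_mul_eq_zero [SigmaFinite μ] {f : E → ℂ}
    (hf : Integrable f μ) (h : ∀ x, ∫ t, innerProbChar x t * f t ∂μ = 0) : f =ᵐ[μ] 0 := by
  have h_im : (fun t ↦ (-Complex.I * f t).re) =ᵐ[μ] 0 :=
    ae_re_eq_zero_of_integral_innerProbChar_mul_eq_zero (hf.const_mul _) fun x ↦ by
      simp only [mul_left_comm _ (-Complex.I), integral_const_mul, h, mul_zero]
  filter_upwards [ae_re_eq_zero_of_integral_innerProbChar_mul_eq_zero hf h, h_im]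
    with t ht_re ht_im
  exact Complex.ext ht_re (by simpa using ht_im)

theorem ae_eq_zero_of_mutuallySingular_of_integral_innerProbChar_mul_eq [SigmaFinite μ]
    [SigmaFinite ν] (hμν : μ ⟂ₘ ν) {φ ψ : E → ℂ} (hφ : Integrable φ μ) (hψ : Integrable ψ ν)
    (h : ∀ x, ∫ t, innerProbChar x t * φ t ∂μ = ∫ t, innerProbChar x t * ψ t ∂ν) :
    φ =ᵐ[μ] 0 := by
  classical
  let θ : E → ℂ := hμν.nullSet.piecewise (fun t ↦ -ψ t) φ
  have hθφ : θ =ᵐ[μ] φ := by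
    filter_upwards [measure_eq_zero_iff_ae_notMem.1 hμν.measure_nullSet] with t ht
    exact Set.piecewise_eq_of_notMem _ _ _ ht
  have hθψ : θ =ᵐ[ν] fun t ↦ -ψ t := by
    filter_upwards [measure_eq_zero_iff_ae_notMem.1 hμν.measure_compl_nullSet] with t ht
    exact Set.piecewise_eq_of_mem _ _ _ (not_not.1 ht)
  have hθμ : Integrable θ μ := hφ.congr hθφ.symm
  have hθν : Integrable θ ν := hψ.neg.congr hθψ.symm
  have hθ : θ =ᵐ[μ + ν] 0 := by
    refine ae_eq_zero_of_integral_innerProbChar_mul_eq_zero (hθμ.add_measure hθν) fun x ↦ ?_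
    calc ∫ t, innerProbChar x t * θ t ∂(μ + ν)
        = ∫ t, innerProbChar x t * θ t ∂μ + ∫ t, innerProbChar x t * θ t ∂ν :=
          integral_add_measure (integrable_boundedContinuousFunction_mul hθμ _)
            (integrable_boundedContinuousFunction_mul hθν _)
      _ = ∫ t, innerProbChar x t * φ t ∂μ + ∫ t, innerProbChar x t * -ψ t ∂ν := by
          congr 1
          · exact integral_congr_ae (hθφ.mono fun t ht ↦ congrArg _ ht)
          · exact integral_congr_ae (hθψ.mono fun t ht ↦ congrArg _ ht)
      _ = 0 := by simp only [mul_neg, integral_neg, h, add_neg_cancel]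
  exact hθφ.symm.trans (ae_add_measure_iff.1 hθ).1

theorem dense_span_toLp_innerProbChar (μ : Measure E) [IsFiniteMeasure μ] :
    Dense (Submodule.span ℂ (Set.range fun x : E ↦ toLp 2 μ ℂ (innerProbChar x)) :
      Set (Lp ℂ 2 μ)) := by
  refine dense_span_range_of_forall_inner_eq_zero fun φ hφ ↦ (Lp.eq_zero_iff_ae_eq_zero).2 ?_
  have h_conj : (fun t ↦ conj (φ t)) =ᵐ[μ] 0 := by
    refine ae_eq_zero_of_integral_innerProbChar_mul_eq_zero
      (((Lp.memLp φ).star).integrable one_le_two) fun x ↦ ?_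
    rw [← inner_toLp_eq_integral, inner_eq_zero_symm.1 (hφ x)]
  filter_upwards [h_conj] with t ht
  exact (map_eq_zero _).1 ht

theorem exists_memLp_inner_eq_integral {H : Type*} [NormedAddCommGroup H] [InnerProductSpace ℂ H]
    [CompleteSpace H] [IsFiniteMeasure μ] {u : E → H}
    (hu : ∀ x y, ⟪u y, u x⟫ = charFun μ (x - y)) (f : H) :
    ∃ φ : E → ℂ, MemLp φ 2 μ ∧ ∀ x, ⟪f, u x⟫ = ∫ t, innerProbChar x t * φ t ∂μ := by
  obtain ⟨T, hT⟩ := exists_linearIsometry_of_inner_eq (dense_span_toLp_innerProbChar μ)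
    fun y x ↦ (inner_toLp_innerProbChar x y).trans (hu x y).symm
  let φ : Lp ℂ 2 μ := adjoint T.toContinuousLinearMap f
  refine ⟨fun t ↦ conj (φ t), (Lp.memLp φ).star, fun x ↦ ?_⟩
  rw [← inner_toLp_eq_integral, adjoint_inner_left, LinearIsometry.coe_toContinuousLinearMap, hT]

end FourierUniqueness

theorem IsVRKHS.disjoint_range_of_mutuallySingular {E Λ H₁ H₂ : Type*}
    [NormedAddCommGroup E] [InnerProductSpace ℝ E] [CompleteSpace E] [SecondCountableTopology E]
    [MeasurableSpace E] [BorelSpace E] [NormedAddCommGroup Λ] [InnerProductSpace ℂ Λ]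
    [NormedAddCommGroup H₁] [InnerProductSpace ℂ H₁] [CompleteSpace H₁]
    [NormedAddCommGroup H₂] [InnerProductSpace ℂ H₂] [CompleteSpace H₂]
    {K₁ K₂ : E → E → Λ →L[ℂ] Λ} {J₁ : H₁ →ₗ[ℂ] (E → Λ)} {J₂ : H₂ →ₗ[ℂ] (E → Λ)}
    {kf₁ : E → Λ → H₁} {kf₂ : E → Λ → H₂} {μ ν : Λ → Measure E}
    [∀ ξ, IsFiniteMeasure (μ ξ)] [∀ ξ, IsFiniteMeasure (ν ξ)] (hμν : ∀ ξ, μ ξ ⟂ₘ ν ξ)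
    (hK₁ : ∀ x y ξ, ⟪ξ, K₁ x y ξ⟫ = charFun (μ ξ) (x - y))
    (hK₂ : ∀ x y ξ, ⟪ξ, K₂ x y ξ⟫ = charFun (ν ξ) (x - y))
    (h₁ : IsVRKHS K₁ H₁ J₁ kf₁) (h₂ : IsVRKHS K₂ H₂ J₂ kf₂) :
    Disjoint (LinearMap.range J₁) (LinearMap.range J₂) := by
  rw [Submodule.disjoint_def]
  rintro _ ⟨a, rfl⟩ ⟨b, hab⟩
  ext x
  refine ext_inner_right ℂ fun ξ ↦ ?_
  obtain ⟨φ, hφ, haφ⟩ := exists_memLp_inner_eq_integral (u := fun y ↦ kf₁ y ξ)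
    (fun y z ↦ by rw [h₁.inner_kf_kf, hK₁]) a
  obtain ⟨ψ, hψ, hbψ⟩ := exists_memLp_inner_eq_integral (u := fun y ↦ kf₂ y ξ)
    (fun y z ↦ by rw [h₂.inner_kf_kf, hK₂]) b
  have hφ_zero : φ =ᵐ[μ ξ] 0 :=
    ae_eq_zero_of_mutuallySingular_of_integral_innerProbChar_mul_eq (hμν ξ)
      (hφ.integrable one_le_two) (hψ.integrable one_le_two) fun y ↦ by
        rw [← haφ, ← hbψ, h₁.inner_kf, h₂.inner_kf, hab]
  calc ⟪J₁ a x, ξ⟫ = ∫ t, BoundedContinuousFunction.innerProbChar x t * φ t ∂μ ξ := by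
        rw [← h₁.inner_kf, haφ]
    _ = 0 := integral_eq_zero_of_ae (hφ_zero.mono fun t ht ↦ by simp [ht])
    _ = ⟪(0 : E → Λ) x, ξ⟫ := by rw [Pi.zero_apply, inner_zero_left]

theorem stmt14_general {E Λ : Type*}
    [NormedAddCommGroup E] [InnerProductSpace ℝ E] [CompleteSpace E] [SecondCountableTopology E]
    [MeasurableSpace E] [BorelSpace E] [NormedAddCommGroup Λ] [InnerProductSpace ℂ Λ]
    {μ ν : Λ → Measure E} [∀ ξ, IsFiniteMeasure (μ ξ)] [∀ ξ, IsFiniteMeasure (ν ξ)]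
    (hμν : ∀ ξ, μ ξ ⟂ₘ ν ξ) {K₁ K₂ K : E → E → Λ →L[ℂ] Λ}
    (hK₁ : ∀ x y ξ, ⟪ξ, K₁ x y ξ⟫ = charFun (μ ξ) (x - y))
    (hK₂ : ∀ x y ξ, ⟪ξ, K₂ x y ξ⟫ = charFun (ν ξ) (x - y))
    (hK : ∀ x y, K x y = K₁ x y + K₂ x y)
    {H₁ : Type*} [NormedAddCommGroup H₁] [InnerProductSpace ℂ H₁] [CompleteSpace H₁]
    {J₁ : H₁ →ₗ[ℂ] (E → Λ)} {kf₁ : E → Λ → H₁} (h₁ : IsVRKHS K₁ H₁ J₁ kf₁)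
    {H₂ : Type*} [NormedAddCommGroup H₂] [InnerProductSpace ℂ H₂] [CompleteSpace H₂]
    {J₂ : H₂ →ₗ[ℂ] (E → Λ)} {kf₂ : E → Λ → H₂} (h₂ : IsVRKHS K₂ H₂ J₂ kf₂)
    {H : Type*} [NormedAddCommGroup H] [InnerProductSpace ℂ H] [CompleteSpace H]
    {J : H →ₗ[ℂ] (E → Λ)} {kf : E → Λ → H} (hH : IsVRKHS K H J kf) :
    Set.range J₁ ∩ Set.range J₂ = {0} ∧
      RKHSle J₁ J ∧ RKHSle J₂ J ∧
      ∀ h : H, ∃ (f₁ : H₁) (f₂ : H₂),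
        J h = J₁ f₁ + J₂ f₂ ∧ ‖h‖ ^ 2 = ‖f₁‖ ^ 2 + ‖f₂‖ ^ 2 := by
  have h_disjoint := IsVRKHS.disjoint_range_of_mutuallySingular hμν hK₁ hK₂ h₁ h₂
  obtain rfl : K = K₁ + K₂ := funext₂ hK
  refine ⟨?_, h₁.orthogonal_decomposition h₂ hH h_disjoint⟩
  simpa only [Submodule.coe_inf, LinearMap.coe_range, Submodule.bot_coe] using
    congrArg SetLike.coe h_disjoint.eq_bot

/-- For a translation-invariant kernel L = L_c + L_s coming from the Lebesgue
decomposition γ = γ_c + γ_s of an operator-valued Borel measure (encoded weakly by the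
diagonal measures Qc ξ ≪ Lebesgue and Qs ξ ⟂ Lebesgue, with L_a given by Fourier integrals of
these), one has H_{L_c} ∩ H_{L_s} = {0} and H_L is the orthogonal direct sum
H_{L_c} ⊕ H_{L_s}. -/
theorem stmt14 {Λ : Type*} [NormedAddCommGroup Λ] [InnerProductSpace ℂ Λ] [CompleteSpace Λ]
    (d : ℕ)
    (Qc Qs : Λ → Measure (EuclideanSpace ℝ (Fin d)))
    (hQcfin : ∀ ξ, IsFiniteMeasure (Qc ξ)) (hQsfin : ∀ ξ, IsFiniteMeasure (Qs ξ))
    (hQcac : ∀ ξ, Qc ξ ≪ volume) (hQssing : ∀ ξ, (Qs ξ).MutuallySingular volume)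
    (Lc Ls L : EuclideanSpace ℝ (Fin d) → EuclideanSpace ℝ (Fin d) → Λ →L[ℂ] Λ)
    (hLc : ∀ x y ξ, ⟪ξ, Lc x y ξ⟫ =
      ∫ t, Complex.exp (Complex.I * ((@inner ℝ _ _ (x - y) t : ℝ) : ℂ)) ∂(Qc ξ))
    (hLs : ∀ x y ξ, ⟪ξ, Ls x y ξ⟫ =
      ∫ t, Complex.exp (Complex.I * ((@inner ℝ _ _ (x - y) t : ℝ) : ℂ)) ∂(Qs ξ))
    (hL : ∀ x y, L x y = Lc x y + Ls x y)
    {Hc : Type*} [NormedAddCommGroup Hc] [InnerProductSpace ℂ Hc] [CompleteSpace Hc]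
    (Jc : Hc →ₗ[ℂ] (EuclideanSpace ℝ (Fin d) → Λ)) (kfc : EuclideanSpace ℝ (Fin d) → Λ → Hc)
    (hHc : IsVRKHS Lc Hc Jc kfc)
    {Hs : Type*} [NormedAddCommGroup Hs] [InnerProductSpace ℂ Hs] [CompleteSpace Hs]
    (Js : Hs →ₗ[ℂ] (EuclideanSpace ℝ (Fin d) → Λ)) (kfs : EuclideanSpace ℝ (Fin d) → Λ → Hs)
    (hHs : IsVRKHS Ls Hs Js kfs)
    {H : Type*} [NormedAddCommGroup H] [InnerProductSpace ℂ H] [CompleteSpace H]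
    (J : H →ₗ[ℂ] (EuclideanSpace ℝ (Fin d) → Λ)) (kf : EuclideanSpace ℝ (Fin d) → Λ → H)
    (hH : IsVRKHS L H J kf) :
    Set.range ⇑Jc ∩ Set.range ⇑Js = {0} ∧
      RKHSle Jc J ∧ RKHSle Js J ∧
      ∀ h : H, ∃ (fc : Hc) (fs : Hs),
        J h = Jc fc + Js fs ∧ ‖h‖ ^ 2 = ‖fc‖ ^ 2 + ‖fs‖ ^ 2 := by
  exact stmt14_general (fun ξ ↦ ((hQssing ξ).mono_ac .rfl (hQcac ξ)).symm)
    (fun x y ξ ↦ (hLc x y ξ).trans (integral_exp_I_mul_inner _))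
    (fun x y ξ ↦ (hLs x y ξ).trans (integral_exp_I_mul_inner _)) hL hHc hHs hH
end
end

section
/- Let X = {x₁,…,x_n} be a finite set and K an 𝓛(Λ)-valued reproducing kernel on X. If there exists λ > 0 such that Σ_{j,k} (K(x_j,x_k)ξ_j, ξ_k)_Λ ≥ λ Σ_j ‖ξ_j‖²_Λ for all ξ_1,…,ξ_n ∈ Λ, then H_K = Λ^X, i.e., K admits no nontrivial refinement. Conversely, if K admits no nontrivial refinement (equivalently H_K = Λ^X), then Σ_{j,k}(K(x_j,x_k)ξ_j, ξ_k)_Λ > 0 whenever not all ξ_j are zero. If Λ is finite-dimensional, these two conditions are equivalent. -/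
open MeasureTheory ContinuousLinearMap
open scoped ComplexOrder

noncomputable section

local notation "⟪" x ", " y "⟫" => @inner ℂ _ _ x y

/-!
Write `S ξ = ∑ x, K(x,·) ξ(x)` for the synthesis map from `ℓ²(X, Λ)` to `H_K`. By the reproducing
property it is formally adjoint to the inclusion `J` of `H_K` into `Λ^X`, and the quadratic form of
`K` is `ξ ↦ ‖S ξ‖²`. Strict positivity thus says that `S` is injective, coercivity that `S` is
bounded below, and `J` is dual to `S`: if `J` has dense range then `S` is injective, while
`J` is surjective as soon as the symmetric operator `J ∘ S` is invertible on `ℓ²(X, Λ)`.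
-/

section FormalAdjoint

variable {𝕜 E F : Type*} [RCLike 𝕜] [NormedAddCommGroup E] [InnerProductSpace 𝕜 E]
  [NormedAddCommGroup F] [InnerProductSpace 𝕜 F]

/-- `S` and `J` are adjoint to each other with respect to the inner products. Unlike for
`ContinuousLinearMap.adjoint`, neither continuity nor completeness is built in, so that the notion
applies to function spaces that are only pre-Hilbert. -/
def IsFormalAdjoint (S : E →ₗ[𝕜] F) (J : F →ₗ[𝕜] E) : Prop :=
  ∀ v f, inner 𝕜 (S v) f = inner 𝕜 v (J f)

namespace IsFormalAdjoint

variable {S : E →ₗ[𝕜] F} {J : F →ₗ[𝕜] E}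

theorem inner_apply_apply_self (h : IsFormalAdjoint S J) (v : E) :
    inner 𝕜 v (J (S v)) = (‖S v‖ : 𝕜) ^ 2 := by
  rw [← h, inner_self_eq_norm_sq_to_K]

theorem isSymmetric_comp (h : IsFormalAdjoint S J) : (J ∘ₗ S).IsSymmetric := fun v w => by
  rw [LinearMap.comp_apply, LinearMap.comp_apply, ← h, ← inner_conj_symm, ← h, inner_conj_symm]

theorem injective_of_denseRange (h : IsFormalAdjoint S J) (hJ : DenseRange J) :
    Function.Injective S := by
  rw [injective_iff_map_eq_zero]
  intro v hv
  refine hJ.eq_zero_of_inner_left 𝕜 fun f => ?_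
  rw [← h, hv, inner_zero_left]

theorem surjective_of_injective [FiniteDimensional 𝕜 E] (h : IsFormalAdjoint S J)
    (hS : Function.Injective S) : Function.Surjective J := by
  have comp_injective : Function.Injective (J ∘ₗ S) := by
    rw [injective_iff_map_eq_zero]
    intro v hv
    have norm_sq_eq_zero : (‖S v‖ : 𝕜) ^ 2 = 0 := by
      rw [← h.inner_apply_apply_self, ← LinearMap.comp_apply, hv, inner_zero_right]
    exact (map_eq_zero_iff S hS).mp (by simpa using norm_sq_eq_zero)
  have comp_surjective : Function.Surjective (J ∘ S) :=
    LinearMap.injective_iff_surjective.mp comp_injective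
  exact comp_surjective.of_comp

theorem surjective_of_bounded_below [CompleteSpace E] (h : IsFormalAdjoint S J) {c : ℝ}
    (hc : 0 < c) (hS : ∀ v, c * ‖v‖ ^ 2 ≤ ‖S v‖ ^ 2) : Function.Surjective J := by
  -- `J ∘ S` is bounded by the Hellinger–Toeplitz theorem.
  let T : E →L[𝕜] E := ⟨J ∘ₗ S, h.isSymmetric_comp.continuous⟩
  have isUnit_T : IsUnit T := by
    refine T.isUnit_of_forall_le_norm_inner_map (c := ⟨c, hc.le⟩) hc fun v => ?_
    calc ‖v‖ ^ 2 * c ≤ ‖S v‖ ^ 2 := by rw [mul_comm]; exact hS v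
      _ = ‖inner 𝕜 v (J (S v))‖ := by simp [h.inner_apply_apply_self]
      _ = ‖inner 𝕜 (T v) v‖ := norm_inner_symm v (T v)
  have comp_surjective : Function.Surjective (J ∘ S) :=
    (ContinuousLinearMap.isUnit_iff_bijective.mp isUnit_T).surjective
  exact comp_surjective.of_comp

end IsFormalAdjoint

end FormalAdjoint

namespace IsVRKHS

variable {X Λ H : Type*} [NormedAddCommGroup Λ] [InnerProductSpace ℂ Λ]
  [NormedAddCommGroup H] [InnerProductSpace ℂ H] {K : X → X → Λ →L[ℂ] Λ}
  {J : H →ₗ[ℂ] (X → Λ)} {kf : X → Λ → H}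

/-- The analysis operator: the inclusion `J` of `H` into `X → Λ`, with the target regarded as
`PiLp 2`, so that it carries the `ℓ²` inner product when `X` is finite. -/
def analysis (J : H →ₗ[ℂ] (X → Λ)) : H →ₗ[ℂ] PiLp 2 fun _ : X => Λ :=
  (WithLp.linearEquiv 2 ℂ (X → Λ)).symm ∘ₗ J

theorem surjective_analysis_iff : Function.Surjective (analysis J) ↔ Function.Surjective J :=
  (WithLp.linearEquiv 2 ℂ (X → Λ)).symm.toEquiv.comp_surjective J

variable [Fintype X]

theorem inner_sum_kf (hH : IsVRKHS K H J kf) (ξ : PiLp 2 fun _ : X => Λ) (f : H) :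
    ⟪∑ x, kf x (ξ x), f⟫ = ⟪ξ, analysis J f⟫ := by
  simp only [sum_inner, hH.repro, PiLp.inner_apply]
  rfl

/-- The synthesis operator `ξ ↦ ∑ x, K(x,·) ξ(x)` from `ℓ²(X, Λ)` to `H`, the formal adjoint of
`analysis J`. Linearity of `kf x` is not part of `IsVRKHS` and comes from the reproducing
property. -/
def synthesis (hH : IsVRKHS K H J kf) : (PiLp 2 fun _ : X => Λ) →ₗ[ℂ] H where
  toFun ξ := ∑ x, kf x (ξ x)
  map_add' ξ η := ext_inner_right ℂ fun f => by simp only [inner_add_left, hH.inner_sum_kf]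
  map_smul' c ξ := ext_inner_right ℂ fun f => by
    simp only [RingHom.id_apply, inner_smul_left, hH.inner_sum_kf]

theorem isFormalAdjoint_synthesis_analysis (hH : IsVRKHS K H J kf) :
    IsFormalAdjoint hH.synthesis (analysis J) :=
  hH.inner_sum_kf

theorem sum_inner_kernel_eq_norm_sq_synthesis (hH : IsVRKHS K H J kf) (ξ : X → Λ) :
    ∑ x, ∑ y, ⟪ξ y, K x y (ξ x)⟫ = ((‖hH.synthesis (WithLp.toLp 2 ξ)‖ ^ 2 : ℝ) : ℂ) := by
  calc ∑ x, ∑ y, ⟪ξ y, K x y (ξ x)⟫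
      = ⟪∑ y, kf y (ξ y), ∑ x, kf x (ξ x)⟫ := by
        simp only [inner_sum, sum_inner, hH.repro, hH.kfun_eq]
    _ = ((‖hH.synthesis (WithLp.toLp 2 ξ)‖ ^ 2 : ℝ) : ℂ) := by
        rw [Complex.ofReal_pow]
        exact inner_self_eq_norm_sq_to_K _

theorem sum_inner_kernel_pos_iff_injective_synthesis (hH : IsVRKHS K H J kf) :
    (∀ ξ : X → Λ, ξ ≠ 0 → (0 : ℂ) < ∑ x, ∑ y, ⟪ξ y, K x y (ξ x)⟫) ↔
      Function.Injective hH.synthesis := by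
  simp only [hH.sum_inner_kernel_eq_norm_sq_synthesis, Complex.zero_lt_real, sq_pos_iff,
    norm_ne_zero_iff]
  rw [injective_iff_map_eq_zero, (WithLp.equiv 2 (X → Λ)).forall_congr_left]
  simp only [WithLp.equiv_symm_apply, WithLp.toLp_eq_zero, not_imp_not, ne_eq]

theorem sum_inner_kernel_pos_of_surjective (hH : IsVRKHS K H J kf) (hJ : Function.Surjective J) :
    ∀ ξ : X → Λ, ξ ≠ 0 → (0 : ℂ) < ∑ x, ∑ y, ⟪ξ y, K x y (ξ x)⟫ :=
  hH.sum_inner_kernel_pos_iff_injective_synthesis.mpr <|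
    hH.isFormalAdjoint_synthesis_analysis.injective_of_denseRange
      (surjective_analysis_iff.mpr hJ).denseRange

theorem surjective_of_coercive [CompleteSpace Λ] (hH : IsVRKHS K H J kf) {c : ℝ} (hc : 0 < c)
    (hK : ∀ ξ : X → Λ,
      ((c * ∑ x, ‖ξ x‖ ^ 2 : ℝ) : ℂ) ≤ ∑ x, ∑ y, ⟪ξ y, K x y (ξ x)⟫) :
    Function.Surjective J := by
  refine surjective_analysis_iff.mp <|
    hH.isFormalAdjoint_synthesis_analysis.surjective_of_bounded_below hc fun ξ => ?_
  rw [PiLp.norm_sq_eq_of_L2, ← Complex.real_le_real]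
  exact (hK ξ).trans_eq (hH.sum_inner_kernel_eq_norm_sq_synthesis ξ)

theorem surjective_of_sum_inner_kernel_pos [FiniteDimensional ℂ Λ] (hH : IsVRKHS K H J kf)
    (hK : ∀ ξ : X → Λ, ξ ≠ 0 → (0 : ℂ) < ∑ x, ∑ y, ⟪ξ y, K x y (ξ x)⟫) :
    Function.Surjective J :=
  surjective_analysis_iff.mp <| hH.isFormalAdjoint_synthesis_analysis.surjective_of_injective <|
    hH.sum_inner_kernel_pos_iff_injective_synthesis.mp hK

end IsVRKHS

theorem stmt19_general {X Λ : Type*} [Fintype X]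
    [NormedAddCommGroup Λ] [InnerProductSpace ℂ Λ] [CompleteSpace Λ]
    (K : X → X → Λ →L[ℂ] Λ)
    {H : Type*} [NormedAddCommGroup H] [InnerProductSpace ℂ H]
    (J : H →ₗ[ℂ] (X → Λ)) (kf : X → Λ → H) (hH : IsVRKHS K H J kf) :
    ((∃ lam : ℝ, 0 < lam ∧ ∀ ξ : X → Λ,
        ((lam * ∑ x, ‖ξ x‖ ^ 2 : ℝ) : ℂ) ≤ ∑ x, ∑ y, ⟪ξ y, K x y (ξ x)⟫) →
      Function.Surjective ⇑J) ∧
    (Function.Surjective ⇑J →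
      ∀ ξ : X → Λ, ξ ≠ 0 → (0 : ℂ) < ∑ x, ∑ y, ⟪ξ y, K x y (ξ x)⟫) ∧
    (FiniteDimensional ℂ Λ →
      (Function.Surjective ⇑J ↔
        ∀ ξ : X → Λ, ξ ≠ 0 → (0 : ℂ) < ∑ x, ∑ y, ⟪ξ y, K x y (ξ x)⟫)) := by
  refine ⟨?_, hH.sum_inner_kernel_pos_of_surjective, fun _ => ?_⟩
  · rintro ⟨c, hc, hK⟩
    exact hH.surjective_of_coercive hc hK
  · exact ⟨hH.sum_inner_kernel_pos_of_surjective, hH.surjective_of_sum_inner_kernel_pos⟩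

/-- On a finite input space X, a uniform coercivity bound
Σ (K(x,y)ξ(x),ξ(y)) ≥ λ Σ ‖ξ(x)‖² (λ > 0) implies H_K = Λ^X (no nontrivial refinement);
conversely, H_K = Λ^X implies strict positive-definiteness of K; and if Λ is
finite-dimensional these are equivalent. -/
theorem stmt19 {X Λ : Type*} [Fintype X]
    [NormedAddCommGroup Λ] [InnerProductSpace ℂ Λ] [CompleteSpace Λ]
    (K : X → X → Λ →L[ℂ] Λ) (hK : IsOpKernel K)
    {H : Type*} [NormedAddCommGroup H] [InnerProductSpace ℂ H] [CompleteSpace H]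
    (J : H →ₗ[ℂ] (X → Λ)) (kf : X → Λ → H) (hH : IsVRKHS K H J kf) :
    ((∃ lam : ℝ, 0 < lam ∧ ∀ ξ : X → Λ,
        ((lam * ∑ x, ‖ξ x‖ ^ 2 : ℝ) : ℂ) ≤ ∑ x, ∑ y, ⟪ξ y, K x y (ξ x)⟫) →
      Function.Surjective ⇑J) ∧
    (Function.Surjective ⇑J →
      ∀ ξ : X → Λ, ξ ≠ 0 → (0 : ℂ) < ∑ x, ∑ y, ⟪ξ y, K x y (ξ x)⟫) ∧
    (FiniteDimensional ℂ Λ →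
      (Function.Surjective ⇑J ↔
        ∀ ξ : X → Λ, ξ ≠ 0 → (0 : ℂ) < ∑ x, ∑ y, ⟪ξ y, K x y (ξ x)⟫)) :=
  stmt19_general K J kf hH
end
end
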